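/- Let G be a double broom with diameter d ≥ 3, ℓ left leaves, r right leaves, and n = d−1+ℓ+r vertices. Then T_mix(G) = (1/(6(n−1)))·(2d³ + 6d²(ℓ+r−2) + d(12ℓ(r−2) − 24r + 37) + ℓ(33 − 24r) + 33r − 42). -/

import Mathlib

/-!
The mixing time of a double broom is attained at a leaf `x` of the diametral path, with worst start
the opposite end `y`, so that `T_mix = H(y,x) - H(π,x)`, which is then computed explicitly.

*Hitting times.* Write `L` for the graph Laplacian. A nonnegative function that vanishes at `v` and
satisfies `L h = deg` off `v` is `H(·,v)` (`hit_eq`). In a double broom adjacency depends only on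
the position of the vertices along the path, all left leaves having position `0` and all right
leaves position `d` (`BroomPos`). Hence the candidates for `H(·,v)` are explicit quadratic
functions of the position (`hitPos`), with a correction at the target when `v` is a leaf
(`hitLeaf`), and the equations are checked by cases in `lap_hitPos` and `lap_hitLeaf`. Right
leaves are handled by reflecting the broom (`BroomPos.symm`).

*Reversal.* Since `L H(·,v) = deg - 2|E| 1_v`, self-adjointness of `L` gives
`H(w,v) - H(π,v) = H(v,w) - H(π,w)` (`hit_sub_hitPi_comm`).

*The maximum.* For an interior vertex `v`, the maximum over `w` of `H(w,v)` is attained at a leaf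
(`hitPos_le`). By reversal `H(w,v) - H(π,v)` for a leaf `w` is `H(v,w) - H(π,w)`, which is at most
the mixing time from `w`. So leaves dominate, and from every leaf the mixing time is the claimed
value, which is symmetric in `ℓ` and `r` (`mixFrom_left`, `mixFrom_right`).
-/

open scoped Classical

namespace RWMix

/-- The degree of a vertex. -/
noncomputable def deg {W : Type*} (G : SimpleGraph W) (v : W) : ℕ :=
  Nat.card {w // G.Adj v w}

/-- The number of edges of a graph. -/
noncomputable def numEdges {W : Type*} (G : SimpleGraph W) : ℕ :=
  Nat.card G.edgeSet

/-- Transition matrix of the simple random walk: from `u` move to each neighbor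
with probability `1/deg u`. -/
noncomputable def step {V : Type*} [Fintype V] (G : SimpleGraph V) : Matrix V V ℝ :=
  Matrix.of fun u w => if G.Adj u w then ((deg G u : ℝ))⁻¹ else 0

/-- The walk killed at `v` (rows at `v` are zeroed out). -/
noncomputable def killed {V : Type*} [Fintype V] (G : SimpleGraph V) (v : V) :
    Matrix V V ℝ :=
  Matrix.of fun u w => if u = v then 0 else step G u w

/-- Expected hitting time `H(u,v)`: the sum over `t ≥ 0` of the probability that the walk
started at `u` has not visited `v` through time `t`.  This equals the expectation of the
first hitting time of `v`, and `hit G u u = 0`. -/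
noncomputable def hit {V : Type*} [Fintype V] [DecidableEq V]
    (G : SimpleGraph V) (u v : V) : ℝ :=
  ∑' t : ℕ, ∑ w : V, (killed G v ^ t) u w * (if w = v then (0 : ℝ) else 1)

/-- The stationary distribution: `π v = deg v / (2 |E|)`. -/
noncomputable def statPr {V : Type*} [Fintype V] (G : SimpleGraph V) (v : V) : ℝ :=
  (deg G v : ℝ) / (2 * (numEdges G : ℝ))

/-- The access time `H(π, v) = ∑_u π_u H(u,v)`. -/
noncomputable def hitPi {V : Type*} [Fintype V] [DecidableEq V]
    (G : SimpleGraph V) (v : V) : ℝ :=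
  ∑ u : V, statPr G u * hit G u v

/-- The mixing time from vertex `v`: `H(v,π) = max_w H(w,v) − H(π,v)`. -/
noncomputable def mixFrom {V : Type*} [Fintype V] [DecidableEq V]
    (G : SimpleGraph V) (v : V) : ℝ :=
  (⨆ w : V, hit G w v) - hitPi G v

/-- The (exact) mixing time `T_mix(G) = max_v H(v,π)`. -/
noncomputable def Tmix {V : Type*} [Fintype V] [DecidableEq V]
    (G : SimpleGraph V) : ℝ :=
  ⨆ v : V, mixFrom G v

/-- Edges of the double broom, on vertex set `Fin (d+1) ⊕ Fin a ⊕ Fin b`: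
the spine path `v_0, …, v_d`, extra left leaves attached to `v_1`,
and extra right leaves attached to `v_{d-1}`. -/
def broomRel (d : ℕ) {a b : ℕ} :
    (Fin (d+1) ⊕ Fin a ⊕ Fin b) → (Fin (d+1) ⊕ Fin a ⊕ Fin b) → Prop
  | Sum.inl i, Sum.inl j => (i : ℕ) + 1 = (j : ℕ)
  | Sum.inr (Sum.inl _), Sum.inl j => (j : ℕ) = 1
  | Sum.inr (Sum.inr _), Sum.inl j => (j : ℕ) = d - 1
  | _, _ => False

/-- The double broom of diameter `d` with `ℓ` left leaves and `r` right leaves: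
the diametral path is `v_0, …, v_d` (where `v_0` is one left leaf and `v_d` one right
leaf), together with `ℓ - 1` further pendant leaves at `v_1` and `r - 1` further pendant
leaves at `v_{d-1}`.  It has `d - 1 + ℓ + r` vertices. -/
def doubleBroom (d ℓ r : ℕ) :
    SimpleGraph (Fin (d+1) ⊕ Fin (ℓ-1) ⊕ Fin (r-1)) :=
  SimpleGraph.fromRel (broomRel d)

/-- The balanced double broom `D_{n,d}`, with `ℓ = ⌈(n-d+1)/2⌉` and `r = ⌊(n-d+1)/2⌋`. -/
def balancedDB (n d : ℕ) :=
  doubleBroom d ((n - d + 2) / 2) ((n - d + 1) / 2)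

/-- A leaf is a vertex of degree one. -/
def IsLeaf {W : Type*} (G : SimpleGraph W) (v : W) : Prop := deg G v = 1

/-- `v 0, v 1, …, v s` is a leaf-to-leaf path in `G`. -/
def IsLeafPath {W : Type*} (G : SimpleGraph W) (s : ℕ) (v : Fin (s+1) → W) : Prop :=
  Function.Injective v ∧
  (∀ i : ℕ, ∀ h : i < s, G.Adj (v ⟨i, by omega⟩) (v ⟨i + 1, by omega⟩)) ∧
  IsLeaf G (v 0) ∧ IsLeaf G (v (Fin.last s))

/-- A caterpillar: every vertex is within distance one of a fixed leaf-to-leaf path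
(the spine). -/
def IsCaterpillar {W : Type*} (G : SimpleGraph W) : Prop :=
  ∃ (s : ℕ) (v : Fin (s+1) → W), IsLeafPath G s v ∧ ∀ w, ∃ i, G.dist w (v i) ≤ 1

/-- Move the leaf `y` from its neighbor `a` to the new neighbor `b`:
delete the edge `{a,y}` and add the edge `{b,y}`. -/
def moveLeaf {W : Type*} (G : SimpleGraph W) (a y b : W) : SimpleGraph W :=
  SimpleGraph.fromEdgeSet ((G.edgeSet \ {s(a, y)}) ∪ {s(b, y)})

/-- A graph is a double broom if it is isomorphic to some `doubleBroom d ℓ r`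
with `ℓ, r ≥ 1`. -/
def IsDoubleBroom {W : Type*} (G : SimpleGraph W) : Prop :=
  ∃ (d ℓ r : ℕ), 1 ≤ ℓ ∧ 1 ≤ r ∧ Nonempty (G ≃g doubleBroom d ℓ r)

/-- A near double broom: not a double broom, but there is exactly one leaf whose
removal results in a double broom. -/
def IsNearDoubleBroom {W : Type*} (G : SimpleGraph W) : Prop :=
  ¬ IsDoubleBroom G ∧
    ∃! x : W, IsLeaf G x ∧ IsDoubleBroom (G.induce {y | y ≠ x})

/-- `w` belongs to the set `V_k`: either `w = v k`, or `w` is a vertex off the spine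
adjacent to `v k`. -/
def inVk {W : Type*} {d : ℕ} (G : SimpleGraph W) (v : Fin (d+1) → W)
    (k : Fin (d+1)) (w : W) : Prop :=
  w = v k ∨ ((∀ m, w ≠ v m) ∧ G.Adj (v k) w)


/-! ### Hitting times and the graph Laplacian -/

section HittingTimes

variable {V : Type*} [Fintype V]

/-- The (unnormalised) graph Laplacian, `(L h)(u) = ∑_{w ∼ u} (h u - h w)`. -/
noncomputable def lap (G : SimpleGraph V) (h : V → ℝ) (u : V) : ℝ :=
  ∑ w, if G.Adj u w then h u - h w else 0

lemma deg_eq_sum (G : SimpleGraph V) (u : V) :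
    (deg G u : ℝ) = ∑ w, if G.Adj u w then (1 : ℝ) else 0 := by
  rw [Finset.sum_boole, deg, Nat.card_eq_fintype_card, Fintype.card_subtype]

lemma killed_nonneg (G : SimpleGraph V) (v a b : V) : 0 ≤ killed G v a b := by
  simp only [killed, step, Matrix.of_apply]
  split_ifs <;> positivity

/-- A nonnegative function vanishing at `v` and satisfying the first-step equations off `v`
(in the form `L h = deg`) is the hitting time to `v`. Iterating the equations gives
`h = ∑_{t<T} K^t 1_{≠v} + K^T h` for the killed kernel `K`; the partial sums are bounded by `h`,
so the series converges, and then `K^T h ≤ (sup h) K^T 1_{≠v} → 0`. -/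
lemma hit_eq [DecidableEq V] (G : SimpleGraph V) (v : V) (h : V → ℝ) (h0 : h v = 0)
    (hn : ∀ u, 0 ≤ h u) (hd : ∀ u, 0 < deg G u)
    (hh : ∀ u, u ≠ v → lap G h u = deg G u) (u : V) : hit G u v = h u := by
  set K := killed G v with hK
  set f : V → ℝ := fun w => if w = v then (0 : ℝ) else 1 with hf
  have hKh : f + K.mulVec h = h := by
    funext a
    by_cases ha : a = v
    · subst ha
      simp [hf, hK, killed, Matrix.mulVec, dotProduct, h0]
    · have hda : (deg G a : ℝ) ≠ 0 := by exact_mod_cast (hd a).ne'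
      have e1 : K.mulVec h a = (deg G a : ℝ)⁻¹ * ∑ w, if G.Adj a w then h w else 0 := by
        simp only [hK, killed, step, Matrix.mulVec, dotProduct, Matrix.of_apply, ha, if_false,
          Finset.mul_sum]
        refine Finset.sum_congr rfl fun w _ => ?_
        split_ifs <;> simp
      have e2 : lap G h a = (deg G a : ℝ) * h a - ∑ w, if G.Adj a w then h w else 0 := by
        rw [deg_eq_sum, lap, Finset.sum_mul, ← Finset.sum_sub_distrib]
        refine Finset.sum_congr rfl fun w _ => ?_
        split_ifs <;> simp
      have e3 := hh a ha
      have e4 : (∑ w, if G.Adj a w then h w else 0) = (deg G a : ℝ) * h a - deg G a := by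
        linarith
      simp only [Pi.add_apply, hf, ha, if_false, e1, e4]
      field_simp
      ring
  have hpow : ∀ t a b, 0 ≤ (K ^ t) a b := by
    intro t
    induction t with
    | zero => intro a b; rw [pow_zero, Matrix.one_apply]; split_ifs <;> norm_num
    | succ t ih =>
      intro a b
      rw [pow_succ, Matrix.mul_apply]
      exact Finset.sum_nonneg fun c _ => mul_nonneg (ih a c) (killed_nonneg G v c b)
  have hmono : ∀ t (x y : V → ℝ), (∀ w, x w ≤ y w) →
      ∀ a, ((K ^ t).mulVec x) a ≤ ((K ^ t).mulVec y) a := by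
    intro t x y hxy a
    exact Finset.sum_le_sum fun c _ => mul_le_mul_of_nonneg_left (hxy c) (hpow t a c)
  have hf0 : ∀ w, 0 ≤ f w := by intro w; simp only [hf]; split_ifs <;> norm_num
  have hnn : ∀ t (x : V → ℝ), (∀ w, 0 ≤ x w) → ∀ a, 0 ≤ ((K ^ t).mulVec x) a := by
    intro t x hx a
    exact Finset.sum_nonneg fun c _ => mul_nonneg (hpow t a c) (hx c)
  have hsum : ∀ T, ∑ t ∈ Finset.range T, ((K ^ t).mulVec f) u + ((K ^ T).mulVec h) u = h u := by
    intro T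
    induction T with
    | zero => simp
    | succ T ih =>
      rw [Finset.sum_range_succ]
      have : ((K ^ T).mulVec h) u = ((K ^ T).mulVec f) u + ((K ^ (T + 1)).mulVec h) u := by
        conv_lhs => rw [← hKh]
        rw [Matrix.mulVec_add, Matrix.mulVec_mulVec, ← pow_succ]
        rfl
      linarith
  have hsm : Summable fun t => ((K ^ t).mulVec f) u := by
    refine summable_of_sum_range_le (c := h u) (fun t => hnn t f hf0 u) fun T => ?_
    have := hsum T
    have := hnn T h hn u
    linarith
  have hbd : ∀ w, h w ≤ (∑ a, h a) * f w := by
    intro w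
    by_cases hw : w = v
    · subst hw; simp [hf, h0]
    · simp only [hf, hw, if_false, mul_one]
      exact Finset.single_le_sum (fun a _ => hn a) (Finset.mem_univ w)
  have hlim : Filter.Tendsto (fun T => ((K ^ T).mulVec h) u) Filter.atTop (nhds 0) := by
    have h1 := (hsm.tendsto_atTop_zero).const_mul (∑ a, h a)
    rw [mul_zero] at h1
    refine squeeze_zero (fun T => hnn T h hn u) (fun T => ?_) h1
    have h2 := hmono T h (fun w => (∑ a, h a) * f w) hbd u
    have h3 : (K ^ T).mulVec (fun w => (∑ a, h a) * f w) u
        = (∑ a, h a) * ((K ^ T).mulVec f) u := by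
      have : (fun w => (∑ a, h a) * f w) = (∑ a, h a) • f := by
        funext w; simp
      rw [this, Matrix.mulVec_smul]; simp
    linarith
  have hS : HasSum (fun t => ((K ^ t).mulVec f) u) (h u) := by
    rw [hsm.hasSum_iff_tendsto_nat]
    have h1 := hlim.const_sub (h u)
    rw [sub_zero] at h1
    refine h1.congr fun T => ?_
    have := hsum T
    linarith
  exact hS.tsum_eq

/-- Self-adjointness of the Laplacian. -/
lemma sum_mul_lap_comm (G : SimpleGraph V) (x y : V → ℝ) :
    ∑ u, x u * lap G y u = ∑ u, y u * lap G x u := by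
  have key : ∀ x y : V → ℝ, ∑ u, x u * lap G y u
      = (∑ u, ∑ w, if G.Adj u w then x u * y u else 0)
        - ∑ u, ∑ w, if G.Adj u w then x u * y w else 0 := by
    intro x y
    rw [← Finset.sum_sub_distrib]
    refine Finset.sum_congr rfl fun u _ => ?_
    rw [lap, Finset.mul_sum, ← Finset.sum_sub_distrib]
    refine Finset.sum_congr rfl fun w _ => ?_
    split_ifs <;> ring
  rw [key x y, key y x]
  congr 1
  · simp only [mul_comm]
  · rw [Finset.sum_comm]
    simp only [G.adj_comm, mul_comm]

lemma two_numEdges (G : SimpleGraph V) : 2 * (numEdges G : ℝ) = ∑ u, (deg G u : ℝ) := by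
  have h := G.sum_degrees_eq_twice_card_edges
  have h1 : ∀ u, deg G u = G.degree u := by
    intro u
    rw [deg, ← SimpleGraph.card_neighborSet_eq_degree, Nat.card_eq_fintype_card]
    rfl
  have h2 : numEdges G = G.edgeFinset.card := by
    rw [numEdges, Nat.card_eq_fintype_card, SimpleGraph.edgeFinset_card]
  simp only [h1, h2]
  exact_mod_cast h.symm

end HittingTimes

/-! ### Vertices of a double broom by position -/

section Brooms

/-- `p` exhibits `G` as a double broom: `p u ∈ {0, …, d}` is the index of the spine vertex `v_i`
(or, for a leaf, the end `0` or `d`) that `u` is lumped with. As the two ends carry only leaves,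
adjacency depends on positions alone, and only positions `0` and `d` are multiply occupied. -/
structure BroomPos {V : Type*} [Fintype V] (G : SimpleGraph V) (p : V → ℕ) (d ℓ r : ℕ) :
    Prop where
  le : ∀ u, p u ≤ d
  adj : ∀ u w, G.Adj u w ↔ p u + 1 = p w ∨ p w + 1 = p u
  left : (Finset.univ.filter fun u => p u = 0).card = ℓ
  right : (Finset.univ.filter fun u => p u = d).card = r
  mid : ∀ i, 0 < i → i < d → (Finset.univ.filter fun u => p u = i).card = 1

/-- The number of vertices at position `i`. -/
noncomputable def cnt {V : Type*} [Fintype V] (p : V → ℕ) (i : ℕ) : ℝ :=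
  ((Finset.univ.filter fun u => p u = i).card : ℝ)

/-- The hitting time from the first spine vertex `v_1` to `v_i`, for `1 ≤ i ≤ d - 1`; the value
at `i = 0` is minus the hitting time from a left leaf to `v_1`. Then `spineHit i - spineHit k`
is the hitting time from position `k` to `v_i` for all `k ≤ i`, since crossing the edge from `v_k`
to `v_{k+1}` takes `2 (ℓ + k - 1) + 1` steps on average. -/
noncomputable def spineHit (ℓ : ℝ) : ℕ → ℝ
  | 0 => -1
  | k + 1 => k * (2 * ℓ + k)

/-- The hitting time from position `i` to the spine vertex `v_j`, for `1 ≤ j ≤ d - 1`. -/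
noncomputable def hitPos (d : ℕ) (ℓ r : ℝ) (j i : ℕ) : ℝ :=
  if i ≤ j then spineHit ℓ j - spineHit ℓ i else spineHit r (d - j) - spineHit r (d - i)

lemma spineHit_ge {ℓ : ℝ} (hl : 0 ≤ ℓ) (i : ℕ) : -1 ≤ spineHit ℓ i := by
  cases i with
  | zero => simp [spineHit]
  | succ k =>
    simp only [spineHit]
    have : 0 ≤ (k : ℝ) * (2 * ℓ + k) := by positivity
    linarith

lemma spineHit_mono {ℓ : ℝ} (hl : 0 ≤ ℓ) {i j : ℕ} (hij : i ≤ j) :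
    spineHit ℓ i ≤ spineHit ℓ j := by
  cases i with
  | zero => exact spineHit_ge hl j
  | succ k =>
    obtain ⟨m, rfl⟩ : ∃ m, j = m + 1 := ⟨j - 1, by omega⟩
    simp only [spineHit]
    have : (k : ℝ) ≤ m := by exact_mod_cast (by omega : k ≤ m)
    gcongr

lemma hitPos_nonneg {d : ℕ} {ℓ r : ℝ} (hl : 0 ≤ ℓ) (hr : 0 ≤ r) (j i : ℕ) :
    0 ≤ hitPos d ℓ r j i := by
  unfold hitPos
  split_ifs with h
  · linarith [spineHit_mono hl h]
  · linarith [spineHit_mono hr (by omega : d - i ≤ d - j)]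

lemma hitPos_self (d : ℕ) (ℓ r : ℝ) (j : ℕ) : hitPos d ℓ r j j = 0 := by
  simp [hitPos]

/-- The hitting time to a fixed interior vertex is maximised by a start at one of the two
ends. -/
lemma hitPos_le {d : ℕ} {ℓ r : ℝ} (hl : 0 ≤ ℓ) (hr : 0 ≤ r) {j : ℕ} (hj : j < d) (i : ℕ) :
    hitPos d ℓ r j i ≤ hitPos d ℓ r j 0 ∨ hitPos d ℓ r j i ≤ hitPos d ℓ r j d := by
  by_cases h : i ≤ j
  · left
    simp only [hitPos, h, if_true, Nat.zero_le]
    have := spineHit_ge hl i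
    simp only [spineHit] at *
    linarith
  · right
    have := spineHit_ge hr (d - i)
    simp only [hitPos, h, if_false, not_le.2 hj, Nat.sub_self]
    simp only [spineHit] at *
    linarith

lemma sum_pos_eq {V : Type*} [Fintype V] (p : V → ℕ) (k : ℕ) (F : ℕ → ℝ) :
    (∑ w, if p w = k then F (p w) else 0) = cnt p k * F k := by
  have : ∀ w, (if p w = k then F (p w) else 0) = if p w = k then F k else 0 := by
    intro w; split_ifs with h
    · rw [h]
    · rfl
  simp only [this, ← Finset.sum_filter, Finset.sum_const, cnt, nsmul_eq_mul]

variable {V : Type*} [Fintype V] {G : SimpleGraph V} {p : V → ℕ} {d ℓ r : ℕ}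

namespace BroomPos

/-- Reading the broom from right to left. -/
lemma symm (B : BroomPos G p d ℓ r) : BroomPos G (fun u => d - p u) d r ℓ where
  le u := Nat.sub_le _ _
  adj u w := by
    have := B.le u
    have := B.le w
    rw [B.adj]
    omega
  left := by
    rw [← B.right]
    congr 1
    ext u
    have := B.le u
    simp only [Finset.mem_filter, Finset.mem_univ, true_and]
    omega
  right := by
    rw [← B.left]
    congr 1
    ext u
    have := B.le u
    simp only [Finset.mem_filter, Finset.mem_univ, true_and]
    omega
  mid i h0 hi := by
    rw [← B.mid (d - i) (by omega) (by omega)]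
    congr 1
    ext u
    have := B.le u
    simp only [Finset.mem_filter, Finset.mem_univ, true_and]
    omega

lemma cnt_zero (B : BroomPos G p d ℓ r) : cnt p 0 = ℓ := by simp [cnt, B.left]
lemma cnt_d (B : BroomPos G p d ℓ r) : cnt p d = r := by simp [cnt, B.right]
lemma cnt_mid (B : BroomPos G p d ℓ r) {i : ℕ} (h0 : 0 < i) (hi : i < d) : cnt p i = 1 := by
  simp [cnt, B.mid i h0 hi]
lemma cnt_gt (B : BroomPos G p d ℓ r) {i : ℕ} (hi : d < i) : cnt p i = 0 := by
  simp only [cnt, Nat.cast_eq_zero, Finset.card_eq_zero, Finset.filter_eq_empty_iff]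
  intro u _ h
  have := B.le u
  omega

/-! ### The hitting times of a double broom -/

/-- A sum over the neighbours of `u`, for a summand depending on positions only. -/
lemma sum_adj (B : BroomPos G p d ℓ r) (u : V) (F : ℕ → ℝ) :
    (∑ w, if G.Adj u w then F (p w) else 0)
      = cnt p (p u + 1) * F (p u + 1)
        + (if p u = 0 then 0 else cnt p (p u - 1) * F (p u - 1)) := by
  have h : ∀ w, (if G.Adj u w then F (p w) else 0)
      = (if p w = p u + 1 then F (p w) else 0)
        + if p u = 0 then 0 else if p w = p u - 1 then F (p w) else 0 := by
    intro w
    rw [if_congr (B.adj u w) rfl rfl]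
    split_ifs <;> first | omega | simp
  simp only [h, Finset.sum_add_distrib, sum_pos_eq]
  split_ifs
  · simp
  · rw [sum_pos_eq]

lemma deg_eq (B : BroomPos G p d ℓ r) (u : V) :
    (deg G u : ℝ) = cnt p (p u + 1) + (if p u = 0 then 0 else cnt p (p u - 1)) := by
  have := B.sum_adj u (fun _ => 1)
  simp only [mul_one] at this
  rw [deg_eq_sum, this]

lemma lap_eq (B : BroomPos G p d ℓ r) (u : V) (F : ℕ → ℝ) :
    lap G (fun w => F (p w)) u = cnt p (p u + 1) * (F (p u) - F (p u + 1))
        + (if p u = 0 then 0 else cnt p (p u - 1) * (F (p u) - F (p u - 1))) :=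
  B.sum_adj u (fun i => F (p u) - F i)

/-- The Laplacian of the hitting time to an interior vertex is `deg - 2|E| 1_{v_j}`. -/
lemma lap_hitPos (B : BroomPos G p d ℓ r) (hd : 3 ≤ d) {j : ℕ} (hj0 : 0 < j) (hj : j < d)
    (u : V) :
    lap G (fun w => hitPos d ℓ r j (p w)) u
      = deg G u - if p u = j then 2 * ((d : ℝ) - 2 + ℓ + r) else 0 := by
  rw [B.lap_eq, B.deg_eq]
  have hle := B.le u
  generalize p u = i at *
  -- The contributions of the edges towards `i + 1` and towards `i - 1`, on either side of `j`.
  have up_lt : i < j → cnt p (i + 1) * (hitPos d ℓ r j i - hitPos d ℓ r j (i + 1))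
      = if i = 0 then 1 else 2 * ℓ + 2 * (i : ℝ) - 1 := by
    intro h
    rw [B.cnt_mid (by omega) (by omega), hitPos, hitPos, if_pos (by omega), if_pos (by omega)]
    cases i with
    | zero => simp [spineHit]
    | succ k => simp [spineHit]; ring
  have dn_le : 0 < i → i ≤ j → cnt p (i - 1) * (hitPos d ℓ r j i - hitPos d ℓ r j (i - 1))
      = if i = 1 then - (ℓ : ℝ) else - (2 * ℓ + 2 * (i : ℝ) - 3) := by
    intro h0 h
    obtain ⟨k, rfl⟩ : ∃ k, i = k + 1 := ⟨i - 1, by omega⟩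
    rw [Nat.add_sub_cancel, hitPos, hitPos, if_pos (by omega), if_pos (by omega)]
    cases k with
    | zero => simp [spineHit, B.cnt_zero]
    | succ k =>
      rw [B.cnt_mid (by omega) (by omega)]; simp [spineHit]; ring
  have dn_gt : j < i → cnt p (i - 1) * (hitPos d ℓ r j i - hitPos d ℓ r j (i - 1))
      = if i = d then 1 else 2 * r + 2 * ((d : ℝ) - i) - 1 := by
    intro h
    have e : hitPos d ℓ r j (i - 1) = spineHit r (d - j) - spineHit r (d - (i - 1)) := by
      rw [hitPos]
      split_ifs with h'
      · rw [show i - 1 = j by omega]; ring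
      · rfl
    rw [B.cnt_mid (by omega) (by omega), e, hitPos, if_neg (by omega)]
    obtain ⟨t, rfl⟩ : ∃ t, d = i + t := ⟨d - i, by omega⟩
    rw [show i + t - (i - 1) = t + 1 by omega, show i + t - i = t by omega]
    cases t with
    | zero => simp [spineHit]
    | succ k => simp [spineHit]; ring
  have up_ge : j ≤ i → i < d → cnt p (i + 1) * (hitPos d ℓ r j i - hitPos d ℓ r j (i + 1))
      = if i + 1 = d then - (r : ℝ) else - (2 * r + 2 * ((d : ℝ) - i) - 3) := by
    intro h h'
    have e : hitPos d ℓ r j i = spineHit r (d - j) - spineHit r (d - i) := by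
      rw [hitPos]
      split_ifs with h'
      · rw [show i = j by omega]; ring
      · rfl
    rw [e, hitPos, if_neg (by omega)]
    obtain ⟨t, rfl⟩ : ∃ t, d = i + 1 + t := ⟨d - (i + 1), by omega⟩
    rw [show i + 1 + t - (i + 1) = t by omega, show i + 1 + t - i = t + 1 by omega]
    cases t with
    | zero => simp [spineHit, B.cnt_d]
    | succ k =>
      rw [B.cnt_mid (by omega) (by omega)]
      simp [spineHit]; ring
  have c_up : i < d → cnt p (i + 1) = if i + 1 = d then (r : ℝ) else 1 := by
    intro h
    split_ifs with h'
    · rw [h', B.cnt_d]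
    · exact B.cnt_mid (by omega) (by omega)
  have c_dn : 0 < i → cnt p (i - 1) = if i = 1 then (ℓ : ℝ) else 1 := by
    intro h
    split_ifs with h'
    · rw [h', B.cnt_zero]
    · exact B.cnt_mid (by omega) (by omega)
  rcases lt_trichotomy i j with h | h | h
  · rw [up_lt h, c_up (by omega), if_neg (by omega : ¬ i + 1 = d), if_neg h.ne]
    by_cases h0 : i = 0
    · simp [h0]
    · rw [dn_le (by omega) h.le, c_dn (by omega)]
      simp only [h0, if_false]
      split_ifs with h1
      · subst h1; push_cast; ring
      · ring
  · have h0 : i ≠ 0 := by omega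
    rw [up_ge h.ge (by omega), c_up (by omega), if_pos h, if_neg h0, if_neg h0,
      dn_le (by omega) h.le, c_dn (by omega)]
    by_cases h1 : i + 1 = d
    · have hc : (d : ℝ) = i + 1 := by rw [← h1]; push_cast; rfl
      simp only [h1, if_true, show i ≠ 1 by omega, if_false, hc]
      ring
    · by_cases h2 : i = 1
      · simp only [h2, if_true, if_false, show 1 + 1 ≠ d by omega]
        push_cast
        ring
      · simp only [h1, h2, if_false]
        ring
  · rw [if_neg h.ne', if_neg (by omega), if_neg (by omega), dn_gt h, c_dn (by omega),
      if_neg (by omega : ¬ i = 1)]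
    by_cases hi : i = d
    · rw [hi, B.cnt_gt (by omega)]; simp
    · rw [up_ge h.le (by omega), c_up (by omega), if_neg hi]
      split_ifs with h1
      · rw [← h1]; push_cast; ring
      · ring

lemma sum_pos (B : BroomPos G p d ℓ r) (hd : 3 ≤ d) (F : ℕ → ℝ) :
    ∑ u, F (p u) = ℓ * F 0 + F 1 + (∑ i ∈ Finset.range (d - 3), F (i + 2)) + F (d - 1)
      + r * F d := by
  obtain ⟨m, rfl⟩ : ∃ m, d = m + 3 := ⟨d - 3, by omega⟩
  have h : ∀ u, F (p u) = ∑ i ∈ Finset.range (m + 4), if p u = i then F (p u) else 0 := by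
    intro u
    have := B.le u
    rw [Finset.sum_ite_eq, if_pos (Finset.mem_range.2 (by omega))]
  rw [Finset.sum_congr rfl fun u _ => h u, Finset.sum_comm]
  simp only [sum_pos_eq]
  rw [Finset.sum_range_succ, Finset.sum_range_succ, Finset.sum_range_succ', Finset.sum_range_succ',
    B.cnt_zero, B.cnt_d, B.cnt_mid (i := m + 2) (by omega) (by omega),
    B.cnt_mid (i := 0 + 1) (by omega) (by omega)]
  have : ∑ k ∈ Finset.range m, cnt p (k + 1 + 1) * F (k + 1 + 1)
      = ∑ k ∈ Finset.range m, F (k + 2) := by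
    refine Finset.sum_congr rfl fun k hk => ?_
    have := Finset.mem_range.1 hk
    rw [B.cnt_mid (by omega) (by omega), one_mul]
  rw [this]
  simp only [Nat.add_sub_cancel, show m + 3 - 1 = m + 2 by omega, zero_add]
  ring

/-- Degree-weighted sums of functions of the position. -/
lemma sum_deg (B : BroomPos G p d ℓ r) (hd : 3 ≤ d) (F : ℕ → ℝ) :
    ∑ u, (deg G u : ℝ) * F (p u) = ℓ * F 0 + (ℓ + 1) * F 1
      + (∑ i ∈ Finset.range (d - 3), 2 * F (i + 2)) + (r + 1) * F (d - 1) + r * F d := by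
  have h := B.sum_pos hd
    (fun i => (cnt p (i + 1) + if i = 0 then 0 else cnt p (i - 1)) * F i)
  simp only [B.deg_eq]
  rw [h]
  have e : ∑ i ∈ Finset.range (d - 3),
      (cnt p (i + 2 + 1) + if i + 2 = 0 then 0 else cnt p (i + 2 - 1)) * F (i + 2)
      = ∑ i ∈ Finset.range (d - 3), 2 * F (i + 2) := by
    refine Finset.sum_congr rfl fun k hk => ?_
    have := Finset.mem_range.1 hk
    rw [if_neg (by omega), B.cnt_mid (by omega) (by omega), B.cnt_mid (by omega) (by omega)]
    norm_num
  rw [e, if_pos rfl, if_neg (by omega), if_neg (by omega), if_neg (by omega),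
    B.cnt_mid (i := 0 + 1) (by omega) (by omega), B.cnt_mid (i := 1 + 1) (by omega) (by omega),
    show d - 1 + 1 = d by omega, B.cnt_d, B.cnt_gt (i := d + 1) (by omega),
    B.cnt_mid (i := d - 1 - 1) (by omega) (by omega),
    B.cnt_mid (i := d - 1) (by omega) (by omega), show (1 : ℕ) - 1 = 0 from rfl, B.cnt_zero]
  ring

lemma numEdges_eq (B : BroomPos G p d ℓ r) (hd : 3 ≤ d) :
    (numEdges G : ℝ) = (d : ℝ) - 2 + ℓ + r := by
  have h1 := two_numEdges G
  have h2 := B.sum_deg hd (fun _ => 1)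
  simp only [mul_one] at h2
  rw [h2, Finset.sum_const, Finset.card_range, nsmul_eq_mul, Nat.cast_sub hd] at h1
  push_cast at h1
  linarith

lemma deg_pos (B : BroomPos G p d ℓ r) (hd : 3 ≤ d) (u : V) : 0 < deg G u := by
  have h := B.deg_eq u
  have hle := B.le u
  have h0 : ∀ i, 0 ≤ cnt p i := fun i => Nat.cast_nonneg _
  have : (0 : ℝ) < deg G u := by
    rw [h]
    by_cases h1 : p u + 1 < d
    · have := B.cnt_mid (i := p u + 1) (by omega) h1
      split_ifs
      · linarith
      · linarith [h0 (p u - 1)]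
    · have := B.cnt_mid (i := p u - 1) (by omega) (by omega)
      rw [if_neg (by omega)]
      linarith [h0 (p u + 1)]
  exact_mod_cast this

/-- The hitting time to a left leaf `x`: unless the start is `x` itself, first reach `v_1`, from
where it takes `2|E| - 1` steps on average. -/
noncomputable def hitLeaf (p : V → ℕ) (d ℓ r : ℕ) (x u : V) : ℝ :=
  hitPos d ℓ r 1 (p u) + (2 * ((d : ℝ) - 2 + ℓ + r) - 1)
    - if u = x then 2 * ((d : ℝ) - 2 + ℓ + r) else 0

lemma lap_hitLeaf (B : BroomPos G p d ℓ r) (hd : 3 ≤ d) {x : V} (hx : p x = 0) (u : V) :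
    lap G (hitLeaf p d ℓ r x) u
      = deg G u - if u = x then 2 * ((d : ℝ) - 2 + ℓ + r) else 0 := by
  set N : ℝ := (d : ℝ) - 2 + ℓ + r with hN
  have h1 := B.lap_hitPos hd (j := 1) (by omega) (by omega) u
  have h2 : lap G (hitLeaf p d ℓ r x) u = lap G (fun w => hitPos d ℓ r 1 (p w)) u
      - lap G (fun w => if w = x then 2 * N else 0) u := by
    simp only [lap, ← Finset.sum_sub_distrib]
    refine Finset.sum_congr rfl fun w _ => ?_
    simp only [hitLeaf, ← hN]
    split_ifs <;> ring
  have h3 : lap G (fun w => if w = x then 2 * N else 0) u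
      = (if u = x then 2 * N else 0) - if p u = 1 then 2 * N else 0 := by
    by_cases hu : u = x
    · subst hu
      have h4 : ∀ w, (if G.Adj u w then (if u = u then 2 * N else 0)
          - (if w = u then 2 * N else 0) else 0) = if p w = 1 then 2 * N else 0 := by
        intro w
        have e : G.Adj u w ↔ p w = 1 := by rw [B.adj, hx]; omega
        by_cases hw : w = u
        · subst hw; simp [hx]
        · simp [e, hw]
      rw [lap, Finset.sum_congr rfl fun w _ => h4 w, sum_pos_eq p 1 (fun _ => 2 * N),
        B.cnt_mid (by omega) (by omega)]
      simp [hx]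
    · have h4 : ∀ w, (if G.Adj u w then (if u = x then 2 * N else 0)
          - (if w = x then 2 * N else 0) else 0)
          = if w = x then (if p u = 1 then - (2 * N) else 0) else 0 := by
        intro w
        rw [if_neg hu]
        by_cases hw : w = x
        · subst hw
          have := B.adj u w
          have e : G.Adj u w ↔ p u = 1 := by rw [this]; omega
          simp [e]
        · simp [hw]
      rw [lap, Finset.sum_congr rfl fun w _ => h4 w]
      simp only [Finset.sum_ite_eq', Finset.mem_univ, if_true, hu, if_false]
      split_ifs <;> simp
  rw [h2, h1, h3, ← hN]
  ring

lemma hitPos_one_zero : hitPos d ℓ r 1 0 = 1 := by simp [hitPos, spineHit]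

lemma hit_interior [DecidableEq V] (B : BroomPos G p d ℓ r) (hd : 3 ≤ d) {v : V} (h0 : 0 < p v)
    (h1 : p v < d) (u : V) : hit G u v = hitPos d ℓ r (p v) (p u) := by
  refine hit_eq G v (fun u => hitPos d ℓ r (p v) (p u)) (hitPos_self _ _ _ _)
    (fun u => hitPos_nonneg (Nat.cast_nonneg _) (Nat.cast_nonneg _) _ _) (B.deg_pos hd) ?_ u
  intro w hw
  have hne : p w ≠ p v := by
    intro h
    obtain ⟨a, ha⟩ := Finset.card_eq_one.1 (B.mid (p v) h0 h1)
    have h2 : w ∈ ({a} : Finset V) := by rw [← ha]; simp [h]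
    have h3 : v ∈ ({a} : Finset V) := by rw [← ha]; simp
    rw [Finset.mem_singleton] at h2 h3
    exact hw (h2.trans h3.symm)
  rw [B.lap_hitPos hd h0 h1, if_neg hne, sub_zero]

lemma edges_pos (_B : BroomPos G p d ℓ r) (hd : 3 ≤ d) : (1 : ℝ) ≤ (d : ℝ) - 2 + ℓ + r := by
  have : (3 : ℝ) ≤ d := by exact_mod_cast hd
  have : (0 : ℝ) ≤ ℓ := Nat.cast_nonneg _
  have : (0 : ℝ) ≤ r := Nat.cast_nonneg _
  linarith

lemma hit_left [DecidableEq V] (B : BroomPos G p d ℓ r) (hd : 3 ≤ d) {x : V} (hx : p x = 0)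
    (u : V) : hit G u x = hitLeaf p d ℓ r x u := by
  refine hit_eq G x (hitLeaf p d ℓ r x) ?_ ?_ (B.deg_pos hd) ?_ u
  · simp only [hitLeaf, hx, hitPos_one_zero, if_true]; ring
  · intro w
    have := B.edges_pos hd
    have := hitPos_nonneg (d := d) (Nat.cast_nonneg ℓ : (0 : ℝ) ≤ ℓ) (Nat.cast_nonneg r) 1 (p w)
    simp only [hitLeaf]
    split_ifs with h
    · subst h
      rw [hx, hitPos_one_zero]; linarith
    · linarith
  · intro w hw
    rw [B.lap_hitLeaf hd hx, if_neg hw, sub_zero]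

/-- The Laplacian of `H(·, v)` is `deg - 2|E| 1_v`. -/
lemma lap_hit [DecidableEq V] (B : BroomPos G p d ℓ r) (hd : 3 ≤ d) (v u : V) :
    lap G (fun w => hit G w v) u = deg G u - if u = v then 2 * (numEdges G : ℝ) else 0 := by
  rw [B.numEdges_eq hd]
  have hle := B.le v
  rcases Nat.eq_zero_or_pos (p v) with h0 | h0
  · rw [show (fun w => hit G w v) = hitLeaf p d ℓ r v from funext (B.hit_left hd h0),
      B.lap_hitLeaf hd h0]
    split_ifs <;> rfl
  · rcases hle.lt_or_eq with h1 | h1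
    · rw [show (fun w => hit G w v) = fun w => hitPos d ℓ r (p v) (p w) from
        funext (B.hit_interior hd h0 h1), B.lap_hitPos hd h0 h1]
      have : p u = p v ↔ u = v := by
        refine ⟨fun h => ?_, fun h => by rw [h]⟩
        obtain ⟨a, ha⟩ := Finset.card_eq_one.1 (B.mid (p v) h0 h1)
        have h2 : u ∈ ({a} : Finset V) := by rw [← ha]; simp [h]
        have h3 : v ∈ ({a} : Finset V) := by rw [← ha]; simp
        rw [Finset.mem_singleton] at h2 h3
        exact h2.trans h3.symm
      simp only [this]
    · have hx : (fun u => d - p u) v = 0 := by simp [h1]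
      rw [show (fun w => hit G w v) = hitLeaf (fun u => d - p u) d r ℓ v from
        funext (B.symm.hit_left hd hx), B.symm.lap_hitLeaf hd hx]
      split_ifs <;> ring

/-! ### Reversal and the mixing time -/

/-- Cycle reversing: `H(w,v) - H(π,v)` is symmetric in `v` and `w`. This is self-adjointness of
the Laplacian applied to `H(·,v)` and `H(·,w)`. -/
lemma hit_sub_hitPi_comm [DecidableEq V] (B : BroomPos G p d ℓ r) (hd : 3 ≤ d) (v w : V) :
    hit G w v - hitPi G v = hit G v w - hitPi G w := by
  have hN : 2 * (numEdges G : ℝ) ≠ 0 := by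
    rw [B.numEdges_eq hd]
    have := B.edges_pos hd
    positivity
  have key : ∀ a b : V, ∑ u, hit G u a * lap G (fun z => hit G z b) u
      = 2 * (numEdges G : ℝ) * (hitPi G a - hit G b a) := by
    intro a b
    have : ∀ u, hit G u a * lap G (fun z => hit G z b) u
        = 2 * (numEdges G : ℝ) * (statPr G u * hit G u a)
          - if u = b then 2 * (numEdges G : ℝ) * hit G u a else 0 := by
      intro u
      have hN' : (numEdges G : ℝ) ≠ 0 := right_ne_zero_of_mul hN
      rw [B.lap_hit hd, statPr]
      split_ifs
      · field_simp
      · field_simp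
        ring
    rw [Finset.sum_congr rfl fun u _ => this u, Finset.sum_sub_distrib, ← Finset.mul_sum]
    simp only [Finset.sum_ite_eq', Finset.mem_univ, if_true, hitPi]
    ring
  have h := sum_mul_lap_comm G (fun z => hit G z v) (fun z => hit G z w)
  rw [key v w, key w v] at h
  have := mul_left_cancel₀ hN h
  linarith

/-- The claimed value of the mixing time. -/
noncomputable def mixValue (d ℓ r : ℝ) : ℝ :=
  (1 / (6 * (d - 2 + ℓ + r))) *
    (2 * d ^ 3 + 6 * d ^ 2 * (ℓ + r - 2) + d * (12 * ℓ * (r - 2) - 24 * r + 37)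
      + ℓ * (33 - 24 * r) + 33 * r - 42)

lemma mixValue_comm (d ℓ r : ℝ) : mixValue d ℓ r = mixValue d r ℓ := by
  unfold mixValue
  rw [show d - 2 + ℓ + r = d - 2 + r + ℓ by ring]
  ring

lemma sum_quadratic (m r A : ℝ) (k : ℕ) :
    ∑ i ∈ Finset.range k, 2 * (A - (m - i) * (2 * r + (m - i)))
      = 2 * (k * A - (k * (m * (2 * r + m)) - (2 * r + 2 * m) * (k * (k - 1) / 2)
          + k * (k - 1) * (2 * k - 1) / 6)) := by
  induction k with
  | zero => simp
  | succ k ih =>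
    rw [Finset.sum_range_succ, ih]
    push_cast
    ring

/-- The mixing time from a left leaf; the worst start is any right leaf. -/
lemma mixFrom_left [DecidableEq V] (B : BroomPos G p d ℓ r) (hd : 3 ≤ d) {x y : V} (hx : p x = 0)
    (hy : p y = d) : mixFrom G x = mixValue d ℓ r := by
  have hN := B.edges_pos hd
  have hyx : y ≠ x := by rintro rfl; omega
  have hsup : (⨆ w, hit G w x) = hit G y x := by
    have : Nonempty V := ⟨x⟩
    refine le_antisymm (ciSup_le fun w => ?_)
      (le_ciSup (f := fun w => hit G w x) (Set.finite_range _).bddAbove y)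
    rw [B.hit_left hd hx, B.hit_left hd hx]
    have h1 : hitPos d ℓ r 1 (p w) ≤ hitPos d ℓ r 1 d := by
      have hge := spineHit_ge (Nat.cast_nonneg r : (0 : ℝ) ≤ r)
      have hmono := spineHit_mono (Nat.cast_nonneg r : (0 : ℝ) ≤ r) (by omega : 1 ≤ d - 1)
      rcases hitPos_le (Nat.cast_nonneg ℓ : (0 : ℝ) ≤ ℓ) (Nat.cast_nonneg r : (0 : ℝ) ≤ r)
        (by omega : 1 < d) (p w) with h | h
      · refine h.trans ?_
        rw [hitPos_one_zero, hitPos, if_neg (by omega), Nat.sub_self]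
        simp only [spineHit] at *
        norm_num at hmono
        linarith
      · exact h
    simp only [hitLeaf, hy, hyx, if_false]
    split_ifs <;> linarith
  have hpi : hitPi G x = (2 * ((d : ℝ) - 2 + ℓ + r) - 2)
      + (∑ u, (deg G u : ℝ) * hitPos d ℓ r 1 (p u)) / (2 * ((d : ℝ) - 2 + ℓ + r)) := by
    have hE := two_numEdges G
    have hdx : (deg G x : ℝ) = 1 := by
      rw [B.deg_eq, hx, if_pos rfl, B.cnt_mid (by omega) (by omega), add_zero]
    rw [B.numEdges_eq hd] at hE
    set N : ℝ := (d : ℝ) - 2 + ℓ + r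
    have e : ∀ u, statPr G u * hit G u x
        = ((deg G u : ℝ) * hitPos d ℓ r 1 (p u) + (deg G u : ℝ) * (2 * N - 1)
          - if u = x then (deg G u : ℝ) * (2 * N) else 0) / (2 * N) := by
      intro u
      rw [statPr, B.numEdges_eq hd, B.hit_left hd hx, hitLeaf]
      split_ifs <;> ring
    rw [hitPi, Finset.sum_congr rfl fun u _ => e u, ← Finset.sum_div, Finset.sum_sub_distrib,
      Finset.sum_add_distrib, ← Finset.sum_mul, ← hE]
    simp only [Finset.sum_ite_eq', Finset.mem_univ, if_true, hdx]
    have : N ≠ 0 := by positivity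
    field_simp
    ring
  rw [mixFrom, hsup, hpi, B.hit_left hd hx, hitLeaf, hy, if_neg hyx, B.sum_deg hd, mixValue]
  obtain ⟨m, rfl⟩ : ∃ m, d = m + 3 := ⟨d - 3, by omega⟩
  have e : ∑ i ∈ Finset.range (m + 3 - 3), 2 * hitPos (m + 3) ℓ r 1 (i + 2)
      = ∑ i ∈ Finset.range m,
        2 * (((m : ℝ) + 1) * (2 * r + (m + 1)) - ((m : ℝ) - i) * (2 * r + ((m : ℝ) - i))) := by
    rw [Nat.add_sub_cancel]
    refine Finset.sum_congr rfl fun i hi => ?_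
    have := Finset.mem_range.1 hi
    obtain ⟨t, rfl⟩ : ∃ t, m = i + t := ⟨m - i, by omega⟩
    rw [hitPos, if_neg (by omega), show i + t + 3 - 1 = (i + t + 1) + 1 by omega,
      show i + t + 3 - (i + 2) = t + 1 by omega]
    simp only [spineHit]
    push_cast
    ring
  rw [e, sum_quadratic, hitPos_one_zero, hitPos_self]
  have h1 : hitPos (m + 3) ℓ r 1 (m + 3 - 1) = ((m : ℝ) + 1) * (2 * r + (m + 1)) := by
    rw [hitPos, if_neg (by omega), show m + 3 - 1 = (m + 1) + 1 by omega,
      show m + 3 - (m + 1 + 1) = 0 + 1 by omega]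
    simp only [spineHit]; push_cast; ring
  have h2 : hitPos (m + 3) ℓ r 1 (m + 3) = ((m : ℝ) + 1) * (2 * r + (m + 1)) + 1 := by
    rw [hitPos, if_neg (by omega), show m + 3 - 1 = (m + 1) + 1 by omega, Nat.sub_self]
    simp only [spineHit]; push_cast; ring
  rw [h1, h2]
  push_cast at hN ⊢
  have : (m : ℝ) + 3 - 2 + ℓ + r ≠ 0 := by positivity
  field_simp
  ring

lemma mixFrom_right [DecidableEq V] (B : BroomPos G p d ℓ r) (hd : 3 ≤ d) {x y : V} (hx : p x = 0)
    (hy : p y = d) : mixFrom G y = mixValue d ℓ r := by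
  rw [mixValue_comm]
  exact B.symm.mixFrom_left hd (x := y) (y := x) (by simp [hy]) (by simp [hx])

theorem Tmix_eq [DecidableEq V] (B : BroomPos G p d ℓ r) (hd : 3 ≤ d) {x y : V} (hx : p x = 0)
    (hy : p y = d) : Tmix G = mixValue d ℓ r := by
  have : Nonempty V := ⟨x⟩
  have hleaf : ∀ v, p v = 0 ∨ p v = d → mixFrom G v = mixValue d ℓ r := by
    rintro v (h | h)
    · exact B.mixFrom_left hd h hy
    · exact B.mixFrom_right hd hx h
  refine le_antisymm (ciSup_le fun v => ?_) ?_
  · by_cases hv : p v = 0 ∨ p v = d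
    · exact (hleaf v hv).le
    · push Not at hv
      have h0 : 0 < p v := Nat.pos_of_ne_zero hv.1
      have h1 : p v < d := lt_of_le_of_ne (B.le v) hv.2
      -- By reversal, a start at a leaf `z` is bounded by the mixing time from `z`.
      have hz : ∀ z, p z = 0 ∨ p z = d → hit G z v - hitPi G v ≤ mixValue d ℓ r := by
        intro z hz
        rw [B.hit_sub_hitPi_comm hd, ← hleaf z hz, mixFrom]
        have := le_ciSup (f := fun w => hit G w z) (Set.finite_range _).bddAbove v
        linarith
      have hw : ∀ w, hit G w v ≤ mixValue d ℓ r + hitPi G v := by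
        intro w
        have hzx := hz x (Or.inl hx)
        have hzy := hz y (Or.inr hy)
        rw [B.hit_interior hd h0 h1, hx] at hzx
        rw [B.hit_interior hd h0 h1, hy] at hzy
        rw [B.hit_interior hd h0 h1]
        rcases hitPos_le (Nat.cast_nonneg ℓ : (0 : ℝ) ≤ ℓ) (Nat.cast_nonneg r : (0 : ℝ) ≤ r) h1
          (p w) with h | h <;> linarith
      have := ciSup_le hw
      rw [mixFrom]
      linarith
  · rw [← B.mixFrom_left hd hx hy]
    exact le_ciSup (f := mixFrom G) (Set.finite_range _).bddAbove x

end BroomPos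

/-! ### Positions in `doubleBroom` -/

/-- The position function of `doubleBroom`. -/
def broomPos (d : ℕ) {a b : ℕ} : Fin (d + 1) ⊕ Fin a ⊕ Fin b → ℕ
  | Sum.inl i => i
  | Sum.inr (Sum.inl _) => 0
  | Sum.inr (Sum.inr _) => d

lemma card_broomPos (d a b i : ℕ) (hi : i ≤ d) :
    (Finset.univ.filter fun u : Fin (d + 1) ⊕ Fin a ⊕ Fin b => broomPos d u = i).card
      = 1 + ((if 0 = i then a else 0) + if d = i then b else 0) := by
  rw [Finset.card_filter, Fintype.sum_sum_type, Fintype.sum_sum_type]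
  congr 1
  · have : ∀ j : Fin (d + 1), broomPos d (Sum.inl j : Fin (d + 1) ⊕ Fin a ⊕ Fin b) = i
        ↔ j = ⟨i, by omega⟩ := by
      intro j; rw [Fin.ext_iff]; rfl
    rw [Finset.sum_congr rfl fun j _ => if_congr (this j) rfl rfl, Finset.sum_ite_eq',
      if_pos (Finset.mem_univ _)]
  · congr 1
    · have : ∀ j : Fin a,
          broomPos d (Sum.inr (Sum.inl j) : Fin (d + 1) ⊕ Fin a ⊕ Fin b) = i ↔ 0 = i :=
        fun j => Iff.rfl
      rw [Finset.sum_congr rfl fun j _ => if_congr (this j) rfl rfl]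
      split_ifs <;> simp
    · have : ∀ j : Fin b,
          broomPos d (Sum.inr (Sum.inr j) : Fin (d + 1) ⊕ Fin a ⊕ Fin b) = i ↔ d = i :=
        fun j => Iff.rfl
      rw [Finset.sum_congr rfl fun j _ => if_congr (this j) rfl rfl]
      split_ifs <;> simp

lemma doubleBroom_broomPos (d ℓ r : ℕ) (hd : 3 ≤ d) (hl : 1 ≤ ℓ) (hr : 1 ≤ r) :
    BroomPos (doubleBroom d ℓ r) (broomPos d) d ℓ r where
  le u := by
    rcases u with i | i | i <;> simp only [broomPos] <;> omega
  adj u w := by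
    rcases u with i | i | i <;> rcases w with j | j | j <;>
      simp only [doubleBroom, SimpleGraph.fromRel_adj, broomRel, broomPos, ne_eq,
        Sum.inl.injEq, Sum.inr.injEq, reduceCtorEq, not_false_eq_true, true_and,
        Fin.ext_iff, or_false, false_or, and_false, false_iff, or_self] <;> omega
  left := by
    rw [card_broomPos d _ _ 0 (by omega), if_pos rfl, if_neg (by omega)]
    omega
  right := by
    rw [card_broomPos d _ _ d le_rfl, if_pos rfl, if_neg (by omega)]
    omega
  mid i h0 hi := by
    rw [card_broomPos d _ _ i hi.le, if_neg (by omega), if_neg (by omega)]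

end Brooms

/-- the mixing time of a double broom with `ℓ` left leaves, `r` right
leaves and `n = d - 1 + ℓ + r` vertices. -/
theorem stmt5 (d ℓ r n : ℕ) (hd : 3 ≤ d) (hl : 1 ≤ ℓ) (hr : 1 ≤ r)
    (hn : n = d - 1 + ℓ + r) :
    Tmix (doubleBroom d ℓ r) =
      (1 / (6 * ((n : ℝ) - 1))) *
        (2 * (d : ℝ) ^ 3 + 6 * (d : ℝ) ^ 2 * ((ℓ : ℝ) + (r : ℝ) - 2)
          + (d : ℝ) * (12 * (ℓ : ℝ) * ((r : ℝ) - 2) - 24 * (r : ℝ) + 37)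
          + (ℓ : ℝ) * (33 - 24 * (r : ℝ)) + 33 * (r : ℝ) - 42) := by
  have h := (doubleBroom_broomPos d ℓ r hd hl hr).Tmix_eq hd
    (x := Sum.inl 0) (y := Sum.inl (Fin.last d)) (by simp [broomPos]) (by simp [broomPos])
  have hn1 : (n : ℝ) - 1 = (d : ℝ) - 2 + ℓ + r := by
    rw [hn, Nat.cast_add, Nat.cast_add, Nat.cast_sub (by omega)]
    push_cast
    ring
  rw [h, BroomPos.mixValue, hn1]

end RWMix
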